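/- Integration by parts for the first-order heat-convolution increment: let x : [0,T] → ℝ be continuously differentiable and let φ be a Schwartz function on ℝ^n. Then for all 0 ≤ s ≤ t ≤ T the following equalities hold in L^p(ℝ^n): ∫_s^t x'(u) (g_{t−u} * φ) du = (x_t − x_s) φ + ∫_s^t (x_u − x_s) (∂g_{t−u} * φ) du = (x_t − x_s) (g_{t−s} * φ) − ∫_s^t (x_t − x_u) (∂g_{t−u} * φ) du, where all integrals are absolutely convergent Bochner integrals in L^p(ℝ^n) (at u = t the first integrand is interpreted as x'(t)φ). -/

import Mathlib

open MeasureTheory Real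
open scoped ENNReal

/-- The heat kernel on ℝ^n: `g_t(ξ) = (2πt)^(-n/2) exp(-|ξ|²/(2t))`. -/
noncomputable def heatKernel (n : ℕ) (t : ℝ) : EuclideanSpace ℝ (Fin n) → ℝ :=
  fun ξ => (2 * π * t) ^ (-(n : ℝ) / 2) * Real.exp (-‖ξ‖ ^ 2 / (2 * t))

/-- Time derivative of the heat kernel:
`∂g_t(ξ) = (2πt)^(-n/2) e^{-|ξ|²/(2t)} (|ξ|²/(2t²) - n/(2t))`. -/
noncomputable def heatKernelDt (n : ℕ) (t : ℝ) : EuclideanSpace ℝ (Fin n) → ℝ :=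
  fun ξ => (2 * π * t) ^ (-(n : ℝ) / 2) * Real.exp (-‖ξ‖ ^ 2 / (2 * t)) *
    (‖ξ‖ ^ 2 / (2 * t ^ 2) - (n : ℝ) / (2 * t))

/-- Convolution of two real functions on ℝ^n. -/
noncomputable def convol {n : ℕ} (f g : EuclideanSpace ℝ (Fin n) → ℝ) :
    EuclideanSpace ℝ (Fin n) → ℝ :=
  fun ξ => ∫ η, f η * g (ξ - η)

/-- Heat semigroup at the level of functions: `S_t φ = g_t * φ` for `t > 0`,
`S_0 = Id` (also for `t ≤ 0`). -/
noncomputable def heatS (n : ℕ) (t : ℝ) (φ : EuclideanSpace ℝ (Fin n) → ℝ) :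
    EuclideanSpace ℝ (Fin n) → ℝ :=
  if 0 < t then convol (heatKernel n t) φ else φ

lemma one_add_pow_mul_exp_neg_sq_le (m : ℕ) {y : ℝ} (hy : 0 ≤ y) :
    (1 + y) ^ m * Real.exp (-y ^ 2 / 4) ≤ m.factorial * Real.exp 2 := by
  have h1 : (1 + y) ^ m ≤ m.factorial * Real.exp (1 + y) := by
    have h := Real.pow_div_factorial_le_exp (1 + y) (by positivity) m
    rwa [div_le_iff₀' (by positivity)] at h
  calc (1 + y) ^ m * Real.exp (-y ^ 2 / 4)
      ≤ m.factorial * Real.exp (1 + y) * Real.exp (-y ^ 2 / 4) := by gcongr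
    _ = m.factorial * Real.exp (1 + y + -y ^ 2 / 4) := by rw [mul_assoc, ← Real.exp_add]
    _ ≤ m.factorial * Real.exp 2 := by
      gcongr
      nlinarith [sq_nonneg (y - 2)]

lemma heatKernel_nonneg (n : ℕ) {r : ℝ} (hr : 0 ≤ r) (η : EuclideanSpace ℝ (Fin n)) :
    0 ≤ heatKernel n r η := by
  unfold heatKernel
  positivity

lemma continuous_heatKernel (n : ℕ) (r : ℝ) : Continuous (heatKernel n r) := by
  unfold heatKernel
  fun_prop

lemma continuous_heatKernelDt (n : ℕ) (r : ℝ) : Continuous (heatKernelDt n r) := by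
  unfold heatKernelDt
  fun_prop

lemma integral_heatKernel (n : ℕ) {r : ℝ} (hr : 0 < r) : ∫ η, heatKernel n r η = 1 := by
  have h := GaussianFourier.integral_rexp_neg_mul_sq_norm
    (V := EuclideanSpace ℝ (Fin n)) (b := 1 / (2 * r)) (by positivity)
  have h2 : ∀ v : EuclideanSpace ℝ (Fin n),
      Real.exp (-‖v‖ ^ 2 / (2 * r)) = Real.exp (-(1 / (2 * r)) * ‖v‖ ^ 2) := fun v => by
    congr 1
    ring
  simp only [heatKernel, integral_const_mul, h2, h, finrank_euclideanSpace, Fintype.card_fin]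
  have h3 : π / (1 / (2 * r)) = 2 * π * r := by field_simp
  rw [h3, ← Real.rpow_add (by positivity), neg_div, neg_add_cancel, Real.rpow_zero]

lemma integrable_heatKernel (n : ℕ) {r : ℝ} (hr : 0 < r) : Integrable (heatKernel n r) :=
  integrable_of_integral_eq_one (integral_heatKernel n hr)

/-- Polynomial weights in the parabolic variable are absorbed by doubling the time. -/
lemma heatKernel_mul_pow_le (n m : ℕ) {r : ℝ} (hr : 0 < r) (η : EuclideanSpace ℝ (Fin n)) :
    heatKernel n r η * (1 + ‖η‖ / √r) ^ m
      ≤ 2 ^ ((n : ℝ) / 2) * (m.factorial * Real.exp 2) * heatKernel n (2 * r) η := by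
  have hy : (‖η‖ / √r) ^ 2 = ‖η‖ ^ 2 / r := by rw [div_pow, Real.sq_sqrt hr.le]
  have hexp : Real.exp (-‖η‖ ^ 2 / (2 * r))
      = Real.exp (-(‖η‖ / √r) ^ 2 / 4) * Real.exp (-‖η‖ ^ 2 / (2 * (2 * r))) := by
    rw [← Real.exp_add, hy]
    congr 1
    field_simp
    ring
  have hpow : (2 * π * r) ^ (-(n : ℝ) / 2)
      = 2 ^ ((n : ℝ) / 2) * (2 * π * (2 * r)) ^ (-(n : ℝ) / 2) := by
    rw [show 2 * π * (2 * r) = 2 * (2 * π * r) by ring,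
      Real.mul_rpow (x := 2) (by positivity) (by positivity), ← mul_assoc,
      ← Real.rpow_add (by positivity), neg_div, add_neg_cancel, Real.rpow_zero, one_mul]
  have h := one_add_pow_mul_exp_neg_sq_le m (y := ‖η‖ / √r) (by positivity)
  unfold heatKernel
  rw [hexp, hpow]
  calc _ = 2 ^ ((n : ℝ) / 2) * ((1 + ‖η‖ / √r) ^ m * Real.exp (-(‖η‖ / √r) ^ 2 / 4)) *
        ((2 * π * (2 * r)) ^ (-(n : ℝ) / 2) * Real.exp (-‖η‖ ^ 2 / (2 * (2 * r)))) := by ring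
    _ ≤ _ := by gcongr

lemma abs_heatKernelDt_le (n : ℕ) {r : ℝ} (hr : 0 < r) (η : EuclideanSpace ℝ (Fin n)) :
    |heatKernelDt n r η| ≤ (n + 1) / r * (heatKernel n r η * (1 + ‖η‖ / √r) ^ 2) := by
  have hy : (‖η‖ / √r) ^ 2 = ‖η‖ ^ 2 / r := by rw [div_pow, Real.sq_sqrt hr.le]
  set y := ‖η‖ / √r with hydef
  have hy0 : 0 ≤ y := by positivity
  have h1 : heatKernelDt n r η = heatKernel n r η * ((y ^ 2 - n) / (2 * r)) := by
    rw [hy]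
    unfold heatKernelDt heatKernel
    field_simp
  have h2 : |(y ^ 2 - n) / (2 * r)| ≤ (n + 1) / r * (1 + y) ^ 2 := by
    have h3 : |y ^ 2 - n| ≤ (n + 1) * (1 + y) ^ 2 * 2 := by
      have hn : (0 : ℝ) ≤ n := by positivity
      have : (0 : ℝ) ≤ n * y := by positivity
      have : (0 : ℝ) ≤ n * y ^ 2 := by positivity
      rw [abs_le]
      constructor <;> nlinarith
    rw [abs_div, abs_of_pos (by positivity : 0 < 2 * r), div_le_iff₀ (by positivity)]
    calc |y ^ 2 - n| ≤ (n + 1) * (1 + y) ^ 2 * 2 := h3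
      _ = _ := by field_simp
  rw [h1, abs_mul, abs_of_nonneg (heatKernel_nonneg n hr.le η)]
  calc _ ≤ heatKernel n r η * ((n + 1) / r * (1 + y) ^ 2) := by
        have := heatKernel_nonneg n hr.le η
        gcongr
    _ = _ := by ring

lemma heatKernel_moment_le (n i j k : ℕ) (T : ℝ) :
    ∃ C, 0 ≤ C ∧ ∀ r, 0 < r → r ≤ T → ∀ η : EuclideanSpace ℝ (Fin n),
      heatKernel n r η * (1 + ‖η‖ / √r) ^ i * (‖η‖ ^ j * (1 + ‖η‖) ^ k)
        ≤ C * √r ^ j * heatKernel n (2 * r) η := by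
  refine ⟨(1 + √T) ^ k * (2 ^ ((n : ℝ) / 2) * ((i + j + k).factorial * Real.exp 2)),
    by positivity, fun r hr hrT η => ?_⟩
  have hsr : 0 < √r := Real.sqrt_pos.2 hr
  have hsT : √r ≤ √T := Real.sqrt_le_sqrt hrT
  have hη : ‖η‖ = √r * (‖η‖ / √r) := by field_simp
  have hmain := heatKernel_mul_pow_le n (i + j + k) hr η
  have hg := heatKernel_nonneg n hr.le η
  set y := ‖η‖ / √r with hydef
  have hy0 : 0 ≤ y := by positivity
  have h1 : ‖η‖ ^ j ≤ √r ^ j * (1 + y) ^ j := by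
    rw [hη, mul_pow]
    gcongr
    linarith
  have h2 : (1 + ‖η‖) ^ k ≤ (1 + √T) ^ k * (1 + y) ^ k := by
    rw [← mul_pow, hη]
    gcongr
    nlinarith [mul_le_mul_of_nonneg_right hsT hy0]
  calc _ ≤ heatKernel n r η * (1 + y) ^ i *
        ((√r ^ j * (1 + y) ^ j) * ((1 + √T) ^ k * (1 + y) ^ k)) := by gcongr
    _ = √r ^ j * (1 + √T) ^ k * (heatKernel n r η * (1 + y) ^ (i + j + k)) := by ring
    _ ≤ √r ^ j * (1 + √T) ^ k * (2 ^ ((n : ℝ) / 2) * ((i + j + k).factorial * Real.exp 2)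
        * heatKernel n (2 * r) η) := by gcongr
    _ = _ := by ring

lemma hasDerivAt_heatKernel (n : ℕ) {r : ℝ} (hr : 0 < r) (η : EuclideanSpace ℝ (Fin n)) :
    HasDerivAt (fun r => heatKernel n r η) (heatKernelDt n r η) r := by
  have h0 : (2 * π * r) ≠ 0 := by positivity
  have h1 : HasDerivAt (fun r : ℝ => (2 * π * r) ^ (-(n : ℝ) / 2))
      ((2 * π * 1) * (-(n : ℝ) / 2) * (2 * π * r) ^ (-(n : ℝ) / 2 - 1)) r :=
    ((hasDerivAt_id r).const_mul (2 * π)).rpow_const (Or.inl h0)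
  have h2 : HasDerivAt (fun r : ℝ => Real.exp (-‖η‖ ^ 2 / (2 * r)))
      (Real.exp (-‖η‖ ^ 2 / (2 * r)) * ((0 * (2 * r) - -‖η‖ ^ 2 * (2 * 1)) / (2 * r) ^ 2)) r :=
    ((hasDerivAt_const r (-‖η‖ ^ 2)).div ((hasDerivAt_id r).const_mul 2) (by simp [hr.ne'])).exp
  refine (h1.mul h2).congr_deriv ?_
  unfold heatKernelDt
  rw [Real.rpow_sub_one h0]
  field_simp
  ring

lemma abs_heatKernelDt_le_of_mem_Ioo (n : ℕ) {r₀ r : ℝ} (hr₀ : 0 < r₀)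
    (hr : r ∈ Set.Ioo (r₀ / 2) (2 * r₀)) (η : EuclideanSpace ℝ (Fin n)) :
    |heatKernelDt n r η| ≤ (n + 1) / (r₀ / 2) * (2 ^ ((n : ℝ) / 2) *
      ((2 : ℕ).factorial * Real.exp 2) * (4 ^ ((n : ℝ) / 2) * heatKernel n (4 * r₀) η)) := by
  have hrpos : 0 < r := by linarith [hr.1]
  refine (abs_heatKernelDt_le n hrpos η).trans ?_
  have hdouble : heatKernel n (2 * r) η ≤ 4 ^ ((n : ℝ) / 2) * heatKernel n (4 * r₀) η := by
    have hpow : (2 * π * (2 * r)) ^ (-(n : ℝ) / 2)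
        ≤ 4 ^ ((n : ℝ) / 2) * (2 * π * (4 * r₀)) ^ (-(n : ℝ) / 2) := by
      have h4 : (4 : ℝ) ^ ((n : ℝ) / 2) = (1 / 4 : ℝ) ^ (-(n : ℝ) / 2) := by
        rw [one_div, Real.inv_rpow (by norm_num), neg_div, Real.rpow_neg (by norm_num), inv_inv]
      rw [h4, ← Real.mul_rpow (by positivity) (by positivity)]
      refine Real.rpow_le_rpow_of_nonpos (by positivity) ?_ ?_
      · nlinarith [hr.1, Real.pi_pos]
      · rw [neg_div]
        simp only [Left.neg_nonpos_iff]
        positivity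
    have hexp : -‖η‖ ^ 2 / (2 * (2 * r)) ≤ -‖η‖ ^ 2 / (2 * (4 * r₀)) := by
      rw [neg_div, neg_div, neg_le_neg_iff]
      refine div_le_div_of_nonneg_left (by positivity) (by positivity) ?_
      linarith [hr.2]
    unfold heatKernel
    rw [← mul_assoc (4 ^ ((n : ℝ) / 2))]
    exact mul_le_mul hpow (Real.exp_le_exp.2 hexp) (by positivity) (by positivity)
  have hmain := heatKernel_mul_pow_le n 2 hrpos η
  have hg := heatKernel_nonneg n hrpos.le η
  have hlow := hr.1.le
  have hnn : 0 ≤ heatKernel n r η * (1 + ‖η‖ / √r) ^ 2 := by positivity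
  calc _ ≤ (n + 1) / (r₀ / 2) * (heatKernel n r η * (1 + ‖η‖ / √r) ^ 2) := by gcongr
    _ ≤ _ := by
      refine mul_le_mul_of_nonneg_left (hmain.trans ?_) (by positivity)
      gcongr

lemma hasDerivAt_integral_heatKernel_mul (n : ℕ) {r : ℝ} (hr : 0 < r)
    {f : EuclideanSpace ℝ (Fin n) → ℝ} (hf : Continuous f) {M : ℝ} (hM : ∀ η, |f η| ≤ M) :
    Integrable (fun η => heatKernelDt n r η * f η) ∧
      HasDerivAt (fun r => ∫ η, heatKernel n r η * f η) (∫ η, heatKernelDt n r η * f η) r := by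
  refine hasDerivAt_integral_of_dominated_loc_of_deriv_le
    (bound := fun η => (n + 1) / (r / 2) * (2 ^ ((n : ℝ) / 2) *
      ((2 : ℕ).factorial * Real.exp 2) * (4 ^ ((n : ℝ) / 2) * heatKernel n (4 * r) η)) * M)
    (F := fun r η => heatKernel n r η * f η) (F' := fun r η => heatKernelDt n r η * f η)
    (Ioo_mem_nhds (by linarith : r / 2 < r) (by linarith : r < 2 * r)) ?_ ?_ ?_ ?_ ?_ ?_
  · exact .of_forall fun r => ((continuous_heatKernel n r).mul hf).aestronglyMeasurable
  · exact (integrable_heatKernel n hr).mul_bdd (c := M) hf.aestronglyMeasurable (.of_forall hM)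
  · exact ((continuous_heatKernelDt n r).mul hf).aestronglyMeasurable
  · refine .of_forall fun η ρ hρ => ?_
    rw [norm_mul]
    exact mul_le_mul (abs_heatKernelDt_le_of_mem_Ioo n hr hρ η) (hM η) (norm_nonneg _)
      ((abs_nonneg _).trans (abs_heatKernelDt_le_of_mem_Ioo n hr hρ η))
  · exact ((((integrable_heatKernel n (by positivity : 0 < 4 * r)).const_mul _).const_mul
      _).const_mul _).mul_const _
  · refine .of_forall fun η ρ hρ => (hasDerivAt_heatKernel n ?_ η).mul_const _
    linarith [hρ.1]

lemma integral_heatKernelDt (n : ℕ) {r : ℝ} (hr : 0 < r) :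
    Integrable (heatKernelDt n r) ∧ ∫ η, heatKernelDt n r η = 0 := by
  obtain ⟨hintegrable, hderiv⟩ := hasDerivAt_integral_heatKernel_mul n hr
    (f := fun _ => 1) continuous_const (M := 1) (by simp)
  simp only [mul_one] at hintegrable hderiv
  refine ⟨hintegrable, hderiv.unique ((hasDerivAt_const r (1 : ℝ)).congr_of_eventuallyEq ?_)⟩
  filter_upwards [Ioi_mem_nhds hr] with ρ hρ using integral_heatKernel n hρ

section Schwartz

variable {n : ℕ} (φ : SchwartzMap (EuclideanSpace ℝ (Fin n)) ℝ)

lemma one_add_norm_pow_le_mul (k : ℕ) {ξ z : EuclideanSpace ℝ (Fin n)} {y : ℝ}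
    (hz : ‖ξ - z‖ ≤ y) : (1 + ‖ξ‖) ^ k ≤ (1 + ‖z‖) ^ k * (1 + y) ^ k := by
  rw [← mul_pow]
  have h1 : ‖ξ‖ ≤ ‖ξ - z‖ + ‖z‖ := by simpa using norm_add_le (ξ - z) z
  have h2 : 0 ≤ y := (norm_nonneg _).trans hz
  gcongr
  nlinarith [norm_nonneg z]

lemma SchwartzMap.abs_comp_sub_le (k : ℕ) :
    ∃ C, 0 ≤ C ∧ ∀ ξ η, |φ (ξ - η)| ≤ C * (1 + ‖η‖) ^ k * ((1 + ‖ξ‖) ^ k)⁻¹ := by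
  obtain ⟨C, hC⟩ : ∃ C, ∀ z, (1 + ‖z‖) ^ k * |φ z| ≤ C := ⟨_, fun z => by
    simpa using SchwartzMap.one_add_le_sup_seminorm_apply (𝕜 := ℝ) (m := (k, 0)) le_rfl le_rfl φ z⟩
  refine ⟨C, (by positivity : (0 : ℝ) ≤ _).trans (hC 0), fun ξ η => ?_⟩
  rw [← div_eq_mul_inv, le_div_iff₀ (by positivity)]
  calc |φ (ξ - η)| * (1 + ‖ξ‖) ^ k
      ≤ |φ (ξ - η)| * ((1 + ‖ξ - η‖) ^ k * (1 + ‖η‖) ^ k) := by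
        gcongr
        exact one_add_norm_pow_le_mul k (by simp)
    _ = (1 + ‖ξ - η‖) ^ k * |φ (ξ - η)| * (1 + ‖η‖) ^ k := by ring
    _ ≤ C * (1 + ‖η‖) ^ k := by
        gcongr
        exact hC _

lemma SchwartzMap.abs_comp_sub_sub_le (k : ℕ) :
    ∃ C, 0 ≤ C ∧ ∀ ξ η, |φ (ξ - η) - φ ξ| ≤
      C * (‖η‖ ^ 1 * (1 + ‖η‖) ^ k) * ((1 + ‖ξ‖) ^ k)⁻¹ := by
  obtain ⟨C, hC⟩ : ∃ C, ∀ z, (1 + ‖z‖) ^ k * ‖fderiv ℝ φ z‖ ≤ C := ⟨_, fun z => by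
    simpa [norm_iteratedFDeriv_one] using
      SchwartzMap.one_add_le_sup_seminorm_apply (𝕜 := ℝ) (m := (k, 1)) le_rfl le_rfl φ z⟩
  refine ⟨C, (by positivity : (0 : ℝ) ≤ _).trans (hC 0), fun ξ η => ?_⟩
  have h := Convex.norm_image_sub_le_of_norm_fderiv_le (𝕜 := ℝ) (f := φ)
    (C := C * (1 + ‖η‖) ^ k * ((1 + ‖ξ‖) ^ k)⁻¹) (s := Metric.closedBall ξ ‖η‖)
    (x := ξ) (y := ξ - η) (fun z _ => φ.differentiableAt) (fun z hz => ?_)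
    (convex_closedBall _ _) (by simp) (by simp)
  · refine h.trans_eq ?_
    rw [sub_sub_cancel_left, norm_neg]
    ring
  · rw [← div_eq_mul_inv, le_div_iff₀ (by positivity)]
    calc ‖fderiv ℝ φ z‖ * (1 + ‖ξ‖) ^ k
        ≤ ‖fderiv ℝ φ z‖ * ((1 + ‖z‖) ^ k * (1 + ‖η‖) ^ k) := by
          gcongr
          exact one_add_norm_pow_le_mul k (by rwa [← dist_eq_norm, dist_comm])
      _ = (1 + ‖z‖) ^ k * ‖fderiv ℝ φ z‖ * (1 + ‖η‖) ^ k := by ring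
      _ ≤ C * (1 + ‖η‖) ^ k := by
          gcongr
          exact hC _

lemma SchwartzMap.exists_abs_le : ∃ M, ∀ z, |φ z| ≤ M := by
  obtain ⟨C, -, hC⟩ := φ.abs_comp_sub_le 0
  exact ⟨C, fun z => by simpa using hC z 0⟩

lemma hasDerivAt_convol_heatKernel {r : ℝ} (hr : 0 < r) (ξ : EuclideanSpace ℝ (Fin n)) :
    Integrable (fun η => heatKernelDt n r η * φ (ξ - η)) ∧
    HasDerivAt (fun r => convol (heatKernel n r) φ ξ) (convol (heatKernelDt n r) φ ξ) r := by
  obtain ⟨M, hM⟩ := φ.exists_abs_le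
  exact hasDerivAt_integral_heatKernel_mul n hr (f := fun η => φ (ξ - η))
    (φ.continuous.comp (continuous_const.sub continuous_id)) fun η => hM _

lemma abs_integral_le_of_le_heatKernel {f : EuclideanSpace ℝ (Fin n) → ℝ} {A r : ℝ} (hr : 0 < r)
    (h : ∀ η, |f η| ≤ A * heatKernel n r η) : |∫ η, f η| ≤ A := by
  refine (norm_integral_le_of_norm_le (f := f) ((integrable_heatKernel n hr).const_mul A)
    (.of_forall h)).trans_eq ?_
  rw [integral_const_mul, integral_heatKernel n hr, mul_one]

lemma abs_convol_heatKernel_le (k : ℕ) (T : ℝ) :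
    ∃ C, 0 ≤ C ∧ ∀ r, 0 < r → r ≤ T → ∀ ξ,
      |convol (heatKernel n r) φ ξ| ≤ C * ((1 + ‖ξ‖) ^ k)⁻¹ := by
  obtain ⟨A, hA, hφ⟩ := φ.abs_comp_sub_le k
  obtain ⟨B, hB, hg⟩ := heatKernel_moment_le n 0 0 k T
  refine ⟨A * B, by positivity, fun r hr hrT ξ => ?_⟩
  refine abs_integral_le_of_le_heatKernel (r := 2 * r) (by positivity) fun η => ?_
  have h0 := heatKernel_nonneg n hr.le η
  have h1 := hg r hr hrT η
  simp only [pow_zero, mul_one, one_mul] at h1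
  rw [abs_mul, abs_of_nonneg h0]
  calc _ ≤ heatKernel n r η * (A * (1 + ‖η‖) ^ k * ((1 + ‖ξ‖) ^ k)⁻¹) := by
        gcongr
        exact hφ ξ η
    _ = A * ((1 + ‖ξ‖) ^ k)⁻¹ * (heatKernel n r η * (1 + ‖η‖) ^ k) := by ring
    _ ≤ A * ((1 + ‖ξ‖) ^ k)⁻¹ * (B * heatKernel n (2 * r) η) := by gcongr
    _ = _ := by ring

lemma abs_convol_heatKernel_sub_le (T : ℝ) :
    ∃ C, 0 ≤ C ∧ ∀ r, 0 < r → r ≤ T → ∀ ξ,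
      |convol (heatKernel n r) φ ξ - φ ξ| ≤ C * √r := by
  obtain ⟨A, hA, hφ⟩ := φ.abs_comp_sub_sub_le 0
  obtain ⟨B, hB, hg⟩ := heatKernel_moment_le n 0 1 0 T
  obtain ⟨M, hM⟩ := φ.exists_abs_le
  refine ⟨A * B, by positivity, fun r hr hrT ξ => ?_⟩
  have hi : Integrable (fun η => heatKernel n r η * φ (ξ - η)) :=
    (integrable_heatKernel n hr).mul_bdd (c := M)
      (φ.continuous.comp (continuous_const.sub continuous_id)).aestronglyMeasurable
      (.of_forall fun η => hM _)
  have heq : convol (heatKernel n r) φ ξ - φ ξ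
      = ∫ η, heatKernel n r η * (φ (ξ - η) - φ ξ) := by
    simp only [mul_sub]
    rw [integral_sub hi ((integrable_heatKernel n hr).mul_const _), integral_mul_const,
      integral_heatKernel n hr, one_mul, convol]
  rw [heq]
  refine abs_integral_le_of_le_heatKernel (r := 2 * r) (by positivity) fun η => ?_
  have h0 := heatKernel_nonneg n hr.le η
  have h1 := hg r hr hrT η
  have h2 := hφ ξ η
  simp only [pow_zero, pow_one, mul_one, inv_one] at h1 h2
  rw [abs_mul, abs_of_nonneg h0]
  calc _ ≤ heatKernel n r η * (A * ‖η‖) := by gcongr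
    _ = A * (heatKernel n r η * ‖η‖) := by ring
    _ ≤ A * (B * √r * heatKernel n (2 * r) η) := by gcongr
    _ = _ := by ring

/-- The cancellation `∫ ∂g_r = 0` improves the singularity of `∂g_r * φ` from `r⁻¹` to `r^(-1/2)`,
which is integrable at `0`. -/
lemma abs_convol_heatKernelDt_le (k : ℕ) (T : ℝ) :
    ∃ C, 0 ≤ C ∧ ∀ r, 0 < r → r ≤ T → ∀ ξ,
      |convol (heatKernelDt n r) φ ξ| ≤ C * r ^ (-(1 / 2) : ℝ) * ((1 + ‖ξ‖) ^ k)⁻¹ := by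
  obtain ⟨A, hA, hφ⟩ := φ.abs_comp_sub_sub_le k
  obtain ⟨B, hB, hg⟩ := heatKernel_moment_le n 2 1 k T
  refine ⟨A * B * (n + 1), by positivity, fun r hr hrT ξ => ?_⟩
  obtain ⟨hintegrable, hzero⟩ := integral_heatKernelDt n hr
  have heq : convol (heatKernelDt n r) φ ξ
      = ∫ η, heatKernelDt n r η * (φ (ξ - η) - φ ξ) := by
    simp only [mul_sub]
    rw [integral_sub (hasDerivAt_convol_heatKernel φ hr ξ).1 (hintegrable.mul_const _),
      integral_mul_const, hzero, zero_mul, sub_zero, convol]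
  rw [heq]
  refine abs_integral_le_of_le_heatKernel (r := 2 * r) (by positivity) fun η => ?_
  have h0 := heatKernel_nonneg n hr.le η
  have h1 := hg r hr hrT η
  have hr2 : r ^ (-(1 / 2) : ℝ) = √r ^ 1 / r := by
    rw [Real.rpow_neg hr.le, ← Real.sqrt_eq_rpow, pow_one, Real.sqrt_div_self']
    simp
  rw [abs_mul, hr2]
  calc _ ≤ ((n + 1) / r * (heatKernel n r η * (1 + ‖η‖ / √r) ^ 2)) *
        (A * (‖η‖ ^ 1 * (1 + ‖η‖) ^ k) * ((1 + ‖ξ‖) ^ k)⁻¹) := by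
        gcongr
        · exact abs_heatKernelDt_le n hr η
        · exact hφ ξ η
    _ = (n + 1) / r * A * ((1 + ‖ξ‖) ^ k)⁻¹ *
        (heatKernel n r η * (1 + ‖η‖ / √r) ^ 2 * (‖η‖ ^ 1 * (1 + ‖η‖) ^ k)) := by ring
    _ ≤ (n + 1) / r * A * ((1 + ‖ξ‖) ^ k)⁻¹ * (B * √r ^ 1 * heatKernel n (2 * r) η) := by gcongr
    _ = _ := by ring

lemma continuousOn_heatS (t : ℝ) (ξ : EuclideanSpace ℝ (Fin n)) :
    ContinuousOn (fun u => heatS n (t - u) φ ξ) (Set.Iic t) := by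
  intro u hu
  rcases (Set.mem_Iic.1 hu).lt_or_eq with hlt | rfl
  · have hd := (hasDerivAt_convol_heatKernel φ (sub_pos.2 hlt) ξ).2.continuousAt
    have hc : ContinuousAt (fun u => convol (heatKernel n (t - u)) φ ξ) u :=
      ContinuousAt.comp (g := fun r => convol (heatKernel n r) φ ξ) (f := fun u => t - u) hd
        (by fun_prop)
    refine (hc.congr ?_).continuousWithinAt
    filter_upwards [Iio_mem_nhds hlt] with v hv
    simp [heatS, Set.mem_Iio.1 hv]
  · obtain ⟨C, hC0, hC⟩ := abs_convol_heatKernel_sub_le φ 1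
    rw [ContinuousWithinAt, tendsto_iff_dist_tendsto_zero]
    have hlim : Filter.Tendsto (fun v => C * √(u - v)) (nhdsWithin u (Set.Iic u)) (nhds 0) := by
      have : Continuous fun v => C * √(u - v) := by fun_prop
      simpa using (this.tendsto u).mono_left nhdsWithin_le_nhds
    refine squeeze_zero' (.of_forall fun _ => dist_nonneg) ?_ hlim
    filter_upwards [self_mem_nhdsWithin,
      mem_nhdsWithin_of_mem_nhds (Ioi_mem_nhds (by linarith : u - 1 < u))] with v hv hv1
    rcases (Set.mem_Iic.1 hv).lt_or_eq with hlt | rfl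
    · have := hC (u - v) (by linarith) (by linarith [Set.mem_Ioi.1 hv1]) ξ
      simpa [heatS, hlt, Real.dist_eq] using this
    · simp

lemma hasDerivAt_heatS {t u : ℝ} (hu : u < t) (ξ : EuclideanSpace ℝ (Fin n)) :
    HasDerivAt (fun u => heatS n (t - u) φ ξ) (-convol (heatKernelDt n (t - u)) φ ξ) u := by
  have hd := (hasDerivAt_convol_heatKernel φ (sub_pos.2 hu) ξ).2
  have hc : HasDerivAt (fun u => convol (heatKernel n (t - u)) φ ξ)
      (-convol (heatKernelDt n (t - u)) φ ξ) u := by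
    simpa using HasDerivAt.comp_const_sub t u hd
  refine hc.congr_of_eventuallyEq ?_
  filter_upwards [Iio_mem_nhds hu] with v hv
  simp [heatS, Set.mem_Iio.1 hv]

lemma intervalIntegrable_sub_rpow_neg_half (s t : ℝ) :
    IntervalIntegrable (fun u : ℝ => (t - u) ^ (-(1 / 2) : ℝ)) volume s t := by
  have h := (intervalIntegral.intervalIntegrable_rpow' (a := t - s) (b := 0)
    (r := (-(1 / 2) : ℝ)) (by norm_num)).comp_sub_left t
  simpa using h

lemma intervalIntegrable_convol_heatKernelDt {s t : ℝ} (hst : s ≤ t)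
    (ξ : EuclideanSpace ℝ (Fin n)) :
    IntervalIntegrable (fun u => -convol (heatKernelDt n (t - u)) φ ξ) volume s t := by
  obtain ⟨C, hC0, hC⟩ := abs_convol_heatKernelDt_le φ 0 (t - s)
  have hae : ∀ᵐ u ∂volume.restrict (Set.Ioc s t), u ∈ Set.Ioo s t := by
    rw [← restrict_Ioo_eq_restrict_Ioc]
    exact ae_restrict_mem measurableSet_Ioo
  rw [intervalIntegrable_iff_integrableOn_Ioc_of_le hst]
  have hdom := ((intervalIntegrable_iff_integrableOn_Ioc_of_le hst).1
    (intervalIntegrable_sub_rpow_neg_half s t)).const_mul C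
  refine Integrable.mono' hdom ?_ ?_
  · refine (measurable_deriv fun u => heatS n (t - u) φ ξ).aestronglyMeasurable.congr ?_
    filter_upwards [hae] with u hu using (hasDerivAt_heatS φ hu.2 ξ).deriv
  · filter_upwards [hae] with u hu
    have := hC (t - u) (by linarith [hu.2]) (by linarith [hu.1]) ξ
    simpa using this

end Schwartz

lemma memLp_inv_one_add_norm_pow (n : ℕ) {p : ℝ} (hp : 1 ≤ p) :
    MemLp (fun ξ : EuclideanSpace ℝ (Fin n) => ((1 + ‖ξ‖) ^ (n + 1))⁻¹) (ENNReal.ofReal p) := by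
  have hcont : Continuous fun ξ : EuclideanSpace ℝ (Fin n) => ((1 + ‖ξ‖) ^ (n + 1))⁻¹ := by
    refine Continuous.inv₀ (by fun_prop) fun ξ => by positivity
  have hintegrable : Integrable fun ξ : EuclideanSpace ℝ (Fin n) => ((1 + ‖ξ‖) ^ (n + 1))⁻¹ := by
    have h := integrable_one_add_norm (E := EuclideanSpace ℝ (Fin n)) (μ := volume)
      (r := ((n + 1 : ℕ) : ℝ)) (by simp)
    refine h.congr (.of_forall fun ξ => ?_)
    simp only
    rw [Real.rpow_neg (by positivity), Real.rpow_natCast]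
  rw [← integrable_norm_rpow_iff hcont.aestronglyMeasurable (by simp; linarith) (by simp),
    ENNReal.toReal_ofReal (by linarith)]
  refine hintegrable.mono' ?_ (.of_forall fun ξ => ?_)
  · exact (hcont.norm.rpow_const fun ξ => Or.inr (by linarith)).aestronglyMeasurable
  · have h0 : 0 ≤ ((1 + ‖ξ‖) ^ (n + 1))⁻¹ := by positivity
    have h1 : ((1 + ‖ξ‖) ^ (n + 1))⁻¹ ≤ 1 :=
      inv_le_one_of_one_le₀ (one_le_pow₀ (by linarith [norm_nonneg ξ]))
    rw [Real.norm_of_nonneg h0, Real.norm_of_nonneg (by positivity)]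
    exact Real.rpow_le_self_of_le_one h0 h1 hp

/-- A pointwise bound by an integrable function of time times a fixed `L^p` weight makes the
time integral of the `L^p` norms finite. -/
lemma lintegral_eLpNorm_mul_lt_top {n : ℕ} {p : ℝ} (hp : 1 ≤ p) {s t : ℝ} (hst : s ≤ t)
    {a b : ℝ → ℝ} {F : ℝ → EuclideanSpace ℝ (Fin n) → ℝ} (ha : Continuous a)
    (hb : IntervalIntegrable b volume s t)
    (hF : ∀ u ∈ Set.Ioo s t, ∀ ξ, |F u ξ| ≤ b u * ((1 + ‖ξ‖) ^ (n + 1))⁻¹) :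
    ∫⁻ u in Set.Ioc s t, eLpNorm (fun ξ => a u * F u ξ) (ENNReal.ofReal p) volume < ⊤ := by
  have hab : IntegrableOn (fun u => |a u| * b u) (Set.Ioc s t) :=
    (intervalIntegrable_iff_integrableOn_Ioc_of_le hst).1
      (hb.continuousOn_mul ha.abs.continuousOn)
  set W := eLpNorm (fun ξ : EuclideanSpace ℝ (Fin n) => ((1 + ‖ξ‖) ^ (n + 1))⁻¹)
    (ENNReal.ofReal p) volume with hW
  have hWtop : W ≠ ⊤ := (memLp_inv_one_add_norm_pow n hp).2.ne
  rw [← restrict_Ioo_eq_restrict_Ioc]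
  calc _ ≤ ∫⁻ u in Set.Ioo s t, ENNReal.ofReal (|a u| * b u) * W := by
        refine setLIntegral_mono' measurableSet_Ioo fun u hu => ?_
        refine eLpNorm_le_mul_eLpNorm_of_ae_le_mul (.of_forall fun ξ => ?_) _
        rw [Real.norm_of_nonneg (by positivity : 0 ≤ ((1 + ‖ξ‖) ^ (n + 1))⁻¹), norm_mul,
          mul_assoc]
        exact mul_le_mul_of_nonneg_left (hF u hu ξ) (abs_nonneg _)
    _ = (∫⁻ u in Set.Ioo s t, ENNReal.ofReal (|a u| * b u)) * W := lintegral_mul_const' _ _ hWtop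
    _ < ⊤ := by
        refine ENNReal.mul_lt_top ?_ hWtop.lt_top
        rw [restrict_Ioo_eq_restrict_Ioc]
        exact Integrable.lintegral_lt_top hab

/-- integration by parts for the first-order heat-convolution
increment.  For `x : [0,T] → ℝ` continuously differentiable and `φ` Schwartz,
`∫_s^t x'(u) (g_{t-u} * φ) du = (x_t - x_s) φ + ∫_s^t (x_u - x_s)(∂g_{t-u} * φ) du
= (x_t - x_s)(g_{t-s} * φ) - ∫_s^t (x_t - x_u)(∂g_{t-u} * φ) du`,
all integrals being absolutely convergent Bochner integrals in `L^p(ℝ^n)`. -/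
theorem integration_by_parts_first_order
    (n : ℕ) (hn : 1 ≤ n) (p : ℝ) (hp : 1 ≤ p) (T : ℝ) (hT : 0 < T)
    (x : ℝ → ℝ) (hx : ContDiff ℝ 1 x)
    (φ : SchwartzMap (EuclideanSpace ℝ (Fin n)) ℝ)
    (s t : ℝ) (hs : 0 ≤ s) (hst : s ≤ t) (ht : t ≤ T) :
    ((∫⁻ u in Set.Ioc s t,
        eLpNorm (fun ξ => deriv x u * convol (heatKernel n (t - u)) (⇑φ) ξ)
          (ENNReal.ofReal p) volume) < ⊤) ∧
    ((∫⁻ u in Set.Ioc s t,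
        eLpNorm (fun ξ => (x u - x s) * convol (heatKernelDt n (t - u)) (⇑φ) ξ)
          (ENNReal.ofReal p) volume) < ⊤) ∧
    ((∫⁻ u in Set.Ioc s t,
        eLpNorm (fun ξ => (x t - x u) * convol (heatKernelDt n (t - u)) (⇑φ) ξ)
          (ENNReal.ofReal p) volume) < ⊤) ∧
    (∀ ξ, (∫ u in s..t, deriv x u * convol (heatKernel n (t - u)) (⇑φ) ξ)
        = (x t - x s) * φ ξ
          + ∫ u in s..t, (x u - x s) * convol (heatKernelDt n (t - u)) (⇑φ) ξ) ∧
    (∀ ξ, (∫ u in s..t, deriv x u * convol (heatKernel n (t - u)) (⇑φ) ξ)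
        = (x t - x s) * convol (heatKernel n (t - s)) (⇑φ) ξ
          - ∫ u in s..t, (x t - x u) * convol (heatKernelDt n (t - u)) (⇑φ) ξ) := by
  have hxc : Continuous x := hx.continuous
  have hderivc : Continuous (deriv x) := hx.continuous_deriv le_rfl
  obtain ⟨A, -, hA⟩ := abs_convol_heatKernel_le φ (n + 1) (t - s)
  obtain ⟨B, -, hB⟩ := abs_convol_heatKernelDt_le φ (n + 1) (t - s)
  have hBint := (intervalIntegrable_sub_rpow_neg_half s t).const_mul B
  have hDt : ∀ u ∈ Set.Ioo s t, ∀ ξ, |convol (heatKernelDt n (t - u)) φ ξ|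
      ≤ B * (t - u) ^ (-(1 / 2) : ℝ) * ((1 + ‖ξ‖) ^ (n + 1))⁻¹ := fun u hu ξ =>
    hB (t - u) (by linarith [hu.2]) (by linarith [hu.1]) ξ
  have hparts : ∀ (c : ℝ) ξ, ∫ u in s..t, (x u - c) * -convol (heatKernelDt n (t - u)) φ ξ
      = (x t - c) * φ ξ - (x s - c) * heatS n (t - s) φ ξ
        - ∫ u in s..t, deriv x u * convol (heatKernel n (t - u)) φ ξ := by
    intro c ξ
    have h := intervalIntegral.integral_mul_deriv_eq_deriv_mul_of_hasDerivAt (a := s) (b := t)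
      (u := fun u => x u - c) (u' := deriv x) (v := fun u => heatS n (t - u) φ ξ)
      (v' := fun u => -convol (heatKernelDt n (t - u)) φ ξ)
      (hxc.sub continuous_const).continuousOn
      ((continuousOn_heatS φ t ξ).mono fun u hu => by
        rw [Set.uIcc_of_le hst] at hu
        exact hu.2)
      (fun u _ => ((hx.differentiable one_ne_zero).differentiableAt.hasDerivAt).sub_const c)
      (fun u hu => hasDerivAt_heatS φ (by simpa [hst] using hu.2) ξ)
      (hderivc.intervalIntegrable _ _) (intervalIntegrable_convol_heatKernelDt φ hst ξ)
    have hcongr : ∫ u in s..t, deriv x u * heatS n (t - u) φ ξ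
        = ∫ u in s..t, deriv x u * convol (heatKernel n (t - u)) φ ξ := by
      rw [intervalIntegral.integral_of_le hst, intervalIntegral.integral_of_le hst,
        ← restrict_Ioo_eq_restrict_Ioc]
      refine setIntegral_congr_fun measurableSet_Ioo fun u hu => ?_
      simp [heatS, hu.2]
    rw [h, hcongr]
    simp [heatS]
  refine ⟨?_, ?_, ?_, fun ξ => ?_, fun ξ => ?_⟩
  · exact lintegral_eLpNorm_mul_lt_top hp hst (a := deriv x) (b := fun _ => A)
      (F := fun u => convol (heatKernel n (t - u)) φ) hderivc (by simp)
      fun u hu ξ => hA (t - u) (by linarith [hu.2]) (by linarith [hu.1]) ξ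
  · exact lintegral_eLpNorm_mul_lt_top hp hst (a := fun u => x u - x s)
      (F := fun u => convol (heatKernelDt n (t - u)) φ) (by fun_prop) hBint hDt
  · exact lintegral_eLpNorm_mul_lt_top hp hst (a := fun u => x t - x u)
      (F := fun u => convol (heatKernelDt n (t - u)) φ) (by fun_prop) hBint hDt
  · have h := hparts (x s) ξ
    simp only [mul_neg, intervalIntegral.integral_neg] at h
    linarith
  · have h := hparts (x t) ξ
    have hS : (x s - x t) * heatS n (t - s) φ ξ
        = (x s - x t) * convol (heatKernel n (t - s)) φ ξ := by
      rcases hst.lt_or_eq with hlt | rfl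
      · simp [heatS, hlt]
      · simp
    have hflip : ∫ u in s..t, (x u - x t) * -convol (heatKernelDt n (t - u)) φ ξ
        = ∫ u in s..t, (x t - x u) * convol (heatKernelDt n (t - u)) φ ξ := by
      congr 1
      ext u
      ring
    rw [hS, hflip] at h
    linarith
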